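/- Let M be a connected oriented smooth n-manifold (n ≥ 2) with volume form ω and let ξ be a smooth vector field on M such that the vector field (div_ω ξ)·ξ has compact support in M. If L_ξ(div_ω ξ) ≥ 0 everywhere on M (the logarithmic rate of volumetric expansion is nondecreasing along trajectories of the flow of ξ), then div_ω ξ = 0 identically on M, i.e. the flow is incompressible and L_ξ ω = 0. -/

import Mathlib

open Manifold MeasureTheory

noncomputable section

/-- The Lie derivative of a real-valued function `f` along a vector field `ξ`:
`(L_ξ f)(x) = df_x(ξ x)`. -/
def lieDerivFun {n : ℕ} {M : Type*} [TopologicalSpace M]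
    [ChartedSpace (EuclideanSpace ℝ (Fin n)) M]
    (ξ : (x : M) → TangentSpace (𝓡 n) x) (f : M → ℝ) (x : M) : ℝ :=
  mfderiv (𝓡 n) 𝓘(ℝ) f x (ξ x)

/-- A smooth vector field on a manifold, i.e. a smooth section of the tangent bundle. -/
def SmoothVectorField {n : ℕ} {M : Type*} [TopologicalSpace M]
    [ChartedSpace (EuclideanSpace ℝ (Fin n)) M] [IsManifold (𝓡 n) (⊤ : ℕ∞) M]
    (ξ : (x : M) → TangentSpace (𝓡 n) x) : Prop :=
  ContMDiff (𝓡 n) (𝓡 n).tangent (⊤ : ℕ∞) (fun x => (⟨x, ξ x⟩ : TangentBundle (𝓡 n) M))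

/-- `IsLieDerivCoeffOf μ ξ h c` encodes, distributionally with respect to the positive
measure `μ` induced by the volume form `ω`, the identity `L_ξ (h·ω) = c·ω` for the Lie
derivative along `ξ`: by integration by parts this holds iff
`∫ ((L_ξ f)·h + f·c) dμ = 0` for every compactly supported smooth test function `f`. -/
def IsLieDerivCoeffOf {n : ℕ} {M : Type*} [TopologicalSpace M]
    [ChartedSpace (EuclideanSpace ℝ (Fin n)) M] [IsManifold (𝓡 n) (⊤ : ℕ∞) M]
    [MeasurableSpace M] (μ : Measure M)
    (ξ : (x : M) → TangentSpace (𝓡 n) x) (h c : M → ℝ) : Prop :=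
  ∀ f : M → ℝ, ContMDiff (𝓡 n) 𝓘(ℝ) (⊤ : ℕ∞) f → HasCompactSupport f →
    ∫ x, (lieDerivFun ξ f x * h x + f x * c x) ∂μ = 0

/-- `IsDivergenceOf μ ξ d` says that `d` is the divergence of `ξ` with respect to the
volume form inducing the measure `μ`, i.e. the unique smooth function with `L_ξ ω = d·ω`. -/
def IsDivergenceOf {n : ℕ} {M : Type*} [TopologicalSpace M]
    [ChartedSpace (EuclideanSpace ℝ (Fin n)) M] [IsManifold (𝓡 n) (⊤ : ℕ∞) M]
    [MeasurableSpace M] (μ : Measure M)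
    (ξ : (x : M) → TangentSpace (𝓡 n) x) (d : M → ℝ) : Prop :=
  ContMDiff (𝓡 n) 𝓘(ℝ) (⊤ : ℕ∞) d ∧ IsLieDerivCoeffOf μ ξ (fun _ => (1 : ℝ)) d

/-!
The Leibniz rule gives `L_ξ (d·ω) = (L_ξ d + d²)·ω` for `d = div_ω ξ`, that is,
`div_ω (d·ξ) = L_ξ d + d²`, which is nonnegative. By Green's theorem, tested against a cutoff
function equal to `1` near the support of `d·ξ`, a compactly supported vector field has integral
zero divergence; so a nonnegative one vanishes, and `L_ξ d ≥ 0` then leaves `d² = 0`.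
-/

open Set Filter Topology

section Cutoff

variable {E : Type*} [NormedAddCommGroup E] [NormedSpace ℝ E] [FiniteDimensional ℝ E]
  {H : Type*} [TopologicalSpace H] {I : ModelWithCorners ℝ E H}
  {M : Type*} [TopologicalSpace M] [ChartedSpace H M] [T2Space M] [IsManifold I (⊤ : ℕ∞) M]

variable (I) in
theorem exists_contMDiff_hasCompactSupport_eventuallyEq_one {K : Set M} (hK : IsCompact K) :
    ∃ χ : M → ℝ, ContMDiff I 𝓘(ℝ) (⊤ : ℕ∞) χ ∧ HasCompactSupport χ ∧
      (∀ x, χ x ∈ Icc 0 1) ∧ χ =ᶠ[𝓝ˢ K] 1 := by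
  refine hK.induction_on ⟨0, contMDiff_const, .zero, by simp, by simp [EventuallyEq]⟩
    ?mono ?union ?nhds
  case mono =>
    rintro s t hst ⟨χ, hχ, hχc, hχI, hχ1⟩
    exact ⟨χ, hχ, hχc, hχI, hχ1.filter_mono (nhdsSet_mono hst)⟩
  case union =>
    rintro s t ⟨χ, hχ, hχc, hχI, hχ1⟩ ⟨ψ, hψ, hψc, hψI, hψ1⟩
    refine ⟨Real.smoothTransition ∘ (χ + ψ),
      Real.smoothTransition.contDiff.contMDiff.comp (hχ.add hψ),
      (hχc.add hψc).comp_left Real.smoothTransition.zero,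
      fun x => ⟨Real.smoothTransition.nonneg _, Real.smoothTransition.le_one _⟩,
      Eventually.union_nhdsSet.2 ⟨hχ1.mono fun x hx => ?_, hψ1.mono fun x hx => ?_⟩⟩ <;>
      apply Real.smoothTransition.one_of_one_le
    · simpa only [Pi.add_apply, hx, Pi.one_apply, le_add_iff_nonneg_right] using (hψI x).1
    · simpa only [Pi.add_apply, hx, Pi.one_apply, le_add_iff_nonneg_left] using (hχI x).1
  case nhds =>
    intro x _
    obtain ⟨ρ⟩ : Nonempty (SmoothBumpFunction I x) := inferInstance
    exact ⟨{y | ρ =ᶠ[𝓝 y] 1}, mem_nhdsWithin_of_mem_nhds ρ.eventuallyEq_one.eventuallyEq_nhds,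
      ρ, ρ.contMDiff, ρ.hasCompactSupport, fun _ => ρ.mem_Icc,
      eventually_nhdsSet_iff_forall.2 fun _ hy => hy⟩

end Cutoff

section LieDeriv

variable {n : ℕ} {M : Type*} [TopologicalSpace M] [ChartedSpace (EuclideanSpace ℝ (Fin n)) M]
  {ξ : (x : M) → TangentSpace (𝓡 n) x} {f g : M → ℝ} {x : M}

theorem lieDerivFun_mul (hf : MDifferentiableAt (𝓡 n) 𝓘(ℝ) f x)
    (hg : MDifferentiableAt (𝓡 n) 𝓘(ℝ) g x) :
    lieDerivFun ξ (f * g) x = f x * lieDerivFun ξ g x + g x * lieDerivFun ξ f x := by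
  rw [lieDerivFun, (hf.hasMFDerivAt.mul hg.hasMFDerivAt).mfderiv]
  rfl

theorem lieDerivFun_smul : lieDerivFun (fun y => g y • ξ y) f x = g x * lieDerivFun ξ f x :=
  (mfderiv (𝓡 n) 𝓘(ℝ) f x).map_smul (g x) (ξ x)

theorem lieDerivFun_eq_zero_of_eventuallyEq_const {a : ℝ}
    (hf : f =ᶠ[𝓝ˢ {y | ξ y ≠ 0}] fun _ => a) : lieDerivFun ξ f x = 0 := by
  by_cases hx : ξ x = 0
  · rw [lieDerivFun, hx, map_zero]
    rfl
  · have hfx : f =ᶠ[𝓝 x] fun _ => a := hf.filter_mono (nhds_le_nhdsSet hx)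
    rw [lieDerivFun, hfx.mfderiv_eq, mfderiv_const]
    rfl

theorem continuous_lieDerivFun [IsManifold (𝓡 n) 1 M]
    (hξ : Continuous fun x => (⟨x, ξ x⟩ : TangentBundle (𝓡 n) M))
    (hf : ContMDiff (𝓡 n) 𝓘(ℝ) 1 f) : Continuous (lieDerivFun ξ f) :=
  continuous_snd.comp <| (tangentBundleModelSpaceHomeomorph 𝓘(ℝ)).continuous.comp <|
    (hf.continuous_tangentMap le_rfl).comp hξ

end LieDeriv

namespace IsLieDerivCoeffOf

variable {n : ℕ} {M : Type*} [TopologicalSpace M] [ChartedSpace (EuclideanSpace ℝ (Fin n)) M]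
  [IsManifold (𝓡 n) (⊤ : ℕ∞) M] [MeasurableSpace M] {μ : Measure M}
  {ξ : (x : M) → TangentSpace (𝓡 n) x} {h c : M → ℝ}

theorem mul_left (hc : IsLieDerivCoeffOf μ ξ h c) {g : M → ℝ}
    (hg : ContMDiff (𝓡 n) 𝓘(ℝ) (⊤ : ℕ∞) g) :
    IsLieDerivCoeffOf μ ξ (fun x => g x * h x) (fun x => lieDerivFun ξ g x * h x + g x * c x) := by
  intro f hf hfc
  rw [← hc (f * g) (hf.mul hg) hfc.mul_right]
  congr with x
  rw [lieDerivFun_mul ((hf x).mdifferentiableAt (by simp)) ((hg x).mdifferentiableAt (by simp)),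
    Pi.mul_apply]
  ring

theorem integral_mul_eq_zero (hc : IsLieDerivCoeffOf μ ξ h c) {χ : M → ℝ}
    (hχ : ContMDiff (𝓡 n) 𝓘(ℝ) (⊤ : ℕ∞) χ) (hχc : HasCompactSupport χ)
    (hχ1 : χ =ᶠ[𝓝ˢ {x | h x • ξ x ≠ 0}] 1) : ∫ x, χ x * c x ∂μ = 0 := by
  rw [← hc χ hχ hχc]
  congr with x
  rw [mul_comm _ (h x), ← lieDerivFun_smul, lieDerivFun_eq_zero_of_eventuallyEq_const hχ1,
    zero_add]

theorem eq_zero_of_nonneg [T2Space M] [OpensMeasurableSpace M] [μ.IsOpenPosMeasure]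
    [IsFiniteMeasureOnCompacts μ] (hc : IsLieDerivCoeffOf μ ξ h c)
    (hsupp : IsCompact (closure {x | h x • ξ x ≠ 0})) (hcont : Continuous c)
    (hnonneg : ∀ x, 0 ≤ c x) (x : M) : c x = 0 := by
  obtain ⟨χ, hχ, hχc, hχI, hχ1⟩ :=
    exists_contMDiff_hasCompactSupport_eventuallyEq_one (𝓡 n)
      (hsupp.union (isCompact_singleton (x := x)))
  have hχx : χ x = 1 := hχ1.self_of_nhdsSet (.inr rfl)
  by_contra hcx
  have hpos : 0 < ∫ y, χ y * c y ∂μ :=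
    (hχ.continuous.mul hcont).integral_pos_of_hasCompactSupport_nonneg_nonzero hχc.mul_right
      (fun y => mul_nonneg (hχI y).1 (hnonneg y)) (x := x) (by rwa [hχx, one_mul])
  exact hpos.ne' <| hc.integral_mul_eq_zero hχ hχc <|
    hχ1.filter_mono <| nhdsSet_mono <| subset_closure.trans subset_union_left

end IsLieDerivCoeffOf

theorem stmt4_general {n : ℕ} {M : Type*} [TopologicalSpace M] [T2Space M]
    [ChartedSpace (EuclideanSpace ℝ (Fin n)) M] [IsManifold (𝓡 n) (⊤ : ℕ∞) M]
    [MeasurableSpace M] [OpensMeasurableSpace M]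
    {μ : Measure M} [μ.IsOpenPosMeasure] [IsFiniteMeasureOnCompacts μ]
    {ξ : (x : M) → TangentSpace (𝓡 n) x}
    (hξ : Continuous fun x => (⟨x, ξ x⟩ : TangentBundle (𝓡 n) M))
    {d : M → ℝ} (hd : IsDivergenceOf μ ξ d)
    (hsupp : IsCompact (closure {x : M | d x • ξ x ≠ 0}))
    (hmono : ∀ x, 0 ≤ lieDerivFun ξ d x) (x : M) : d x = 0 := by
  obtain ⟨hd_smooth, hd_div⟩ := hd
  have hdiv : IsLieDerivCoeffOf μ ξ d (fun y => lieDerivFun ξ d y + d y ^ 2) := by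
    simpa only [mul_one, ← sq] using hd_div.mul_left hd_smooth
  have hcont : Continuous fun y => lieDerivFun ξ d y + d y ^ 2 :=
    (continuous_lieDerivFun hξ (hd_smooth.of_le (by simp))).add (hd_smooth.continuous.pow 2)
  have hzero : lieDerivFun ξ d x + d x ^ 2 = 0 :=
    hdiv.eq_zero_of_nonneg hsupp hcont (fun y => add_nonneg (hmono y) (sq_nonneg _)) x
  exact sq_eq_zero_iff.1 ((add_eq_zero_iff_of_nonneg (hmono x) (sq_nonneg _)).1 hzero).2

/-- On a connected oriented smooth `n`-manifold (`n ≥ 2`) with volume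
form `ω`, if the vector field `(div_ω ξ)·ξ` has compact support and
`L_ξ(div_ω ξ) ≥ 0` everywhere, then `div_ω ξ = 0` identically: the flow is incompressible
and `L_ξ ω = 0`. -/
theorem stmt4
    {n : ℕ} (hn : 2 ≤ n)
    {M : Type*} [TopologicalSpace M] [T2Space M]
    [ChartedSpace (EuclideanSpace ℝ (Fin n)) M] [IsManifold (𝓡 n) (⊤ : ℕ∞) M]
    [ConnectedSpace M] [MeasurableSpace M] [BorelSpace M]
    (ω : (x : M) → AlternatingMap ℝ (TangentSpace (𝓡 n) x) ℝ (Fin n))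
    (hω : ∀ x, ω x ≠ 0)
    (μ : Measure M) [Measure.IsOpenPosMeasure μ] [IsFiniteMeasureOnCompacts μ]
    (ξ : (x : M) → TangentSpace (𝓡 n) x) (hξ : SmoothVectorField ξ)
    (d : M → ℝ) (hd : IsDivergenceOf μ ξ d)
    (hsupp : IsCompact (closure {x : M | d x • ξ x ≠ 0}))
    (hmono : ∀ x, 0 ≤ lieDerivFun ξ d x) :
    ∀ x, d x = 0 := by
  exact stmt4_general hξ.continuous hd hsupp hmono
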